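/- (Addition-deletion theorem for r(A).) Let ℓ ≥ 2, let A be an essential hyperplane arrangement in K^ℓ, let H ∈ A, and suppose A' = A \ {H} is also essential and nonempty. Let r = r(A), r' = r(A') and r'' = r(A^H), where A^H is the restricted arrangement in H ≅ K^{ℓ-1}. If r' < r'', then r = r' + 1. -/

import Mathlib

open Classical MvPolynomial

variable {K : Type*} [Field K] [CharZero K] {ℓ : ℕ}

/-- A (central) hyperplane arrangement: a finite set of nonzero linear forms,
pairwise non-proportional. -/
def IsArrangement (A : Finset (MvPolynomial (Fin ℓ) K)) : Prop :=
  (∀ α ∈ A, α ≠ 0 ∧ α.IsHomogeneous 1) ∧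
    ∀ α ∈ A, ∀ β ∈ A, α ≠ β → ∀ c : K, α ≠ c • β

/-- The arrangement is essential: the common zero set of its forms is `{0}`. -/
def IsEssential (A : Finset (MvPolynomial (Fin ℓ) K)) : Prop :=
  ∀ v : Fin ℓ → K, (∀ α ∈ A, eval v α = 0) → v = 0

/-- The defining polynomial `Q(A)`. -/
noncomputable def Qpoly (A : Finset (MvPolynomial (Fin ℓ) K)) : MvPolynomial (Fin ℓ) K :=
  ∏ α ∈ A, α

/-- Apply a derivation `θ = Σ θ_j ∂_j` to a polynomial. -/
noncomputable def applyDer (θ : Fin ℓ → MvPolynomial (Fin ℓ) K)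
    (f : MvPolynomial (Fin ℓ) K) : MvPolynomial (Fin ℓ) K :=
  ∑ j, θ j * pderiv j f

/-- The minimal degree of a Jacobian relation `r(A)`. -/
noncomputable def mdr (A : Finset (MvPolynomial (Fin ℓ) K)) : ℕ :=
  sInf {r | ∃ θ : Fin ℓ → MvPolynomial (Fin ℓ) K, θ ≠ 0 ∧
    (∀ j, (θ j).IsHomogeneous r) ∧ applyDer θ (Qpoly A) = 0}

/-- The number of elements `|A^H|` of the restriction of `A` to `H`:
the number of distinct subspaces `H ∩ ker α_L`, `L ∈ A \ {H}`. -/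
noncomputable def restCard (A : Finset (MvPolynomial (Fin ℓ) K))
    (H : MvPolynomial (Fin ℓ) K) : ℕ :=
  ((A.erase H).image fun L => {v : Fin ℓ → K | eval v H = 0 ∧ eval v L = 0}).card

/-- `B` is a realization (in `ℓ - 1` variables) of the restricted arrangement `A^H`:
there is an injective linear parametrization `e` of the hyperplane `H = ker α_H`
such that the zero sets of the forms of `B` correspond exactly to the traces
`H ∩ ker α_L`, `L ∈ A \ {H}`, of the other hyperplanes of `A` on `H`. -/
def IsRestrictionOf (A : Finset (MvPolynomial (Fin ℓ) K)) (H : MvPolynomial (Fin ℓ) K)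
    (B : Finset (MvPolynomial (Fin (ℓ - 1)) K)) : Prop :=
  IsArrangement B ∧
  ∃ e : (Fin (ℓ - 1) → K) →ₗ[K] (Fin ℓ → K),
    Function.Injective e ∧ (∀ w, eval (e w) H = 0) ∧
    (B.image fun β => {w : Fin (ℓ - 1) → K | eval w β = 0}) =
      ((A.erase H).image fun L => {w : Fin (ℓ - 1) → K | eval (e w) L = 0})

set_option linter.unusedSectionVars false

attribute [local instance] MvPolynomial.gradedAlgebra in
lemma hom_div {n : ℕ} {P g : MvPolynomial (Fin n) K} {m d : ℕ} (hP : P.IsHomogeneous m)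
    (hP0 : P ≠ 0) (h : (P * g).IsHomogeneous (m + d)) : g.IsHomogeneous d := by
  have h1 : P * homogeneousComponent d g = P * g := by
    have := DirectSum.coe_decompose_mul_add_of_left_mem (homogeneousSubmodule (Fin n) K)
      (i := m) (j := d) (a := P) (b := g) hP
    rw [← decomposition.decompose'_apply]
    have h2 := DirectSum.decompose_of_mem_same (homogeneousSubmodule (Fin n) K) (x := P * g)
      (i := m + d) h
    rw [h2] at this
    exact this.symm
  rw [← mul_left_cancel₀ hP0 h1]
  exact homogeneousComponent_isHomogeneous _ _

lemma pderiv_lin {n : ℕ} {α : MvPolynomial (Fin n) K} (h : α.IsHomogeneous 1) :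
    ∃ a : Fin n → K, (∀ i, pderiv i α = C (a i)) ∧ α = ∑ i, C (a i) * X i ∧
      ∀ v, eval v α = ∑ i, a i * v i := by
  have h0 : ∀ i, ∃ a, pderiv i α = C a := by
    intro i
    have := h.pderiv (i := i)
    rw [← totalDegree_zero_iff_isHomogeneous, totalDegree_eq_zero_iff_eq_C] at this
    exact ⟨_, this⟩
  choose a ha using h0
  have h1 : α = ∑ i, C (a i) * X i := by
    have := h.sum_X_mul_pderiv
    rw [one_smul] at this
    conv_lhs => rw [← this]
    refine Finset.sum_congr rfl fun i _ => ?_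
    rw [ha, mul_comm]
  refine ⟨a, ha, h1, fun v => ?_⟩
  conv_lhs => rw [h1]
  simp

lemma lin_prime {n : ℕ} {α : MvPolynomial (Fin n) K} (h : α.IsHomogeneous 1) (h0 : α ≠ 0) :
    Prime α := by
  apply Irreducible.prime
  apply irreducible_of_totalDegree_eq_one (h.totalDegree h0)
  intro x hx
  rw [isUnit_iff_ne_zero]
  rintro rfl
  apply h0
  ext m
  simpa using hx m

lemma lin_dvd {n : ℕ} {α β : MvPolynomial (Fin n) K} (h : α.IsHomogeneous 1) (h0 : α ≠ 0)
    (hβ : β.IsHomogeneous 1) (hd : α ∣ β) : ∃ c : K, β = c • α := by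
  obtain ⟨g, rfl⟩ := hd
  have := hom_div (d := 0) h h0 hβ
  rw [← totalDegree_zero_iff_isHomogeneous, totalDegree_eq_zero_iff_eq_C] at this
  refine ⟨coeff 0 g, ?_⟩
  conv_lhs => rw [this]
  rw [smul_eq_C_mul, mul_comm]

lemma lin_prop {n : ℕ} {α β : MvPolynomial (Fin n) K} (h : α.IsHomogeneous 1)
    (hβ : β.IsHomogeneous 1) (hz : ∀ v, eval v α = 0 → eval v β = 0) : ∃ c : K, β = c • α := by
  obtain ⟨a, -, ha, ha'⟩ := pderiv_lin h
  obtain ⟨b, -, hb, hb'⟩ := pderiv_lin hβ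
  let f : (Fin n → K) →ₗ[K] K := Fintype.linearCombination K a
  let g : (Fin n → K) →ₗ[K] K := Fintype.linearCombination K b
  have hf : ∀ v, f v = eval v α := by
    intro v; rw [ha']; simp [f, Fintype.linearCombination_apply, mul_comm]
  have hg : ∀ v, g v = eval v β := by
    intro v; rw [hb']; simp [g, Fintype.linearCombination_apply, mul_comm]
  have := mem_span_of_iInf_ker_le_ker (ι := Unit) (L := fun _ => f) (K := g) (by
    intro v hv
    simp only [iInf_const, LinearMap.mem_ker] at hv ⊢
    rw [hg]; apply hz; rw [← hf]; exact hv)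
  simp only [Set.range_const, Submodule.mem_span_singleton] at this
  obtain ⟨c, hc⟩ := this
  refine ⟨c, ?_⟩
  apply MvPolynomial.funext
  intro v
  rw [← hg, ← hc, smul_eval, ← hf]
  simp

lemma applyDer_mul {n : ℕ} (θ : Fin n → MvPolynomial (Fin n) K) (f g : MvPolynomial (Fin n) K) :
    applyDer θ (f * g) = applyDer θ f * g + f * applyDer θ g := by
  simp only [applyDer, Derivation.leibniz, smul_eq_mul, Finset.sum_mul, Finset.mul_sum,
    ← Finset.sum_add_distrib]
  exact Finset.sum_congr rfl fun i _ => by ring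

lemma applyDer_smul_E {n : ℕ} (g : MvPolynomial (Fin n) K) {f : MvPolynomial (Fin n) K} {d : ℕ}
    (hf : f.IsHomogeneous d) : applyDer (fun j => g * X j) f = (d : MvPolynomial (Fin n) K) * g * f := by
  have := hf.sum_X_mul_pderiv
  simp only [applyDer, mul_assoc, ← Finset.mul_sum, this]
  rw [nsmul_eq_mul]; ring

lemma applyDer_sub {n : ℕ} (θ φ : Fin n → MvPolynomial (Fin n) K) (f : MvPolynomial (Fin n) K) :
    applyDer (fun j => θ j - φ j) f = applyDer θ f - applyDer φ f := by
  simp [applyDer, sub_mul]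

lemma applyDer_smul {n : ℕ} (g : MvPolynomial (Fin n) K) (θ : Fin n → MvPolynomial (Fin n) K)
    (f : MvPolynomial (Fin n) K) :
    applyDer (fun j => g * θ j) f = g * applyDer θ f := by
  simp [applyDer, mul_assoc, Finset.mul_sum]

lemma applyDer_hom {n d m : ℕ} {θ : Fin n → MvPolynomial (Fin n) K} {f : MvPolynomial (Fin n) K}
    (hθ : ∀ j, (θ j).IsHomogeneous d) (hf : f.IsHomogeneous m) :
    (applyDer θ f).IsHomogeneous (d + (m - 1)) :=
  IsHomogeneous.sum _ _ _ fun j _ => (hθ j).mul hf.pderiv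

lemma Q_hom {n : ℕ} {A : Finset (MvPolynomial (Fin n) K)} (hA : IsArrangement A) :
    (Qpoly A).IsHomogeneous A.card := by
  have := IsHomogeneous.prod A id (fun _ => 1) fun α h => (hA.1 α h).2
  simpa [Qpoly] using this

lemma Q_ne {n : ℕ} {A : Finset (MvPolynomial (Fin n) K)} (hA : IsArrangement A) :
    Qpoly A ≠ 0 := Finset.prod_ne_zero_iff.2 fun α h => (hA.1 α h).1

lemma Q_erase {n : ℕ} {A : Finset (MvPolynomial (Fin n) K)} {α : MvPolynomial (Fin n) K}
    (h : α ∈ A) : Qpoly A = α * Qpoly (A.erase α) := by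
  simpa [Qpoly] using (Finset.mul_prod_erase A id h).symm

lemma arr_erase {n : ℕ} {A : Finset (MvPolynomial (Fin n) K)} (hA : IsArrangement A)
    (α : MvPolynomial (Fin n) K) : IsArrangement (A.erase α) :=
  ⟨fun β h => hA.1 β (Finset.mem_of_mem_erase h), fun β h γ h' =>
    hA.2 β (Finset.mem_of_mem_erase h) γ (Finset.mem_of_mem_erase h')⟩

lemma arr_ndvd {n : ℕ} {A : Finset (MvPolynomial (Fin n) K)} (hA : IsArrangement A)
    {α β : MvPolynomial (Fin n) K} (h : α ∈ A) (h' : β ∈ A) (hne : α ≠ β) : ¬ α ∣ β := by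
  intro hd
  obtain ⟨c, hc⟩ := lin_dvd (hA.1 α h).2 (hA.1 α h).1 (hA.1 β h').2 hd
  exact hA.2 β h' α h hne.symm c hc

/-- `D_0(A) ⊆ D(A)`. -/
lemma D0_D {n : ℕ} {A : Finset (MvPolynomial (Fin n) K)} (hA : IsArrangement A)
    {θ : Fin n → MvPolynomial (Fin n) K} (hθ : applyDer θ (Qpoly A) = 0)
    {α : MvPolynomial (Fin n) K} (h : α ∈ A) : α ∣ applyDer θ α := by
  have hp := lin_prime (hA.1 α h).2 (hA.1 α h).1
  rw [Q_erase h, applyDer_mul] at hθ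
  have h1 : α ∣ applyDer θ α * Qpoly (A.erase α) := by
    rw [eq_neg_of_add_eq_zero_left hθ, dvd_neg]
    exact dvd_mul_right _ _
  refine (hp.dvd_or_dvd h1).resolve_right fun h2 => ?_
  obtain ⟨β, hβ, hd⟩ := (Prime.dvd_finsetProd_iff hp _).1 h2
  exact arr_ndvd hA h (Finset.mem_of_mem_erase hβ) (Finset.ne_of_mem_erase hβ).symm hd

lemma D_dvd {n : ℕ} (A : Finset (MvPolynomial (Fin n) K))
    {θ : Fin n → MvPolynomial (Fin n) K} (hθ : ∀ α ∈ A, α ∣ applyDer θ α) :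
    Qpoly A ∣ applyDer θ (Qpoly A) := by
  induction A using Finset.induction_on with
  | empty => simp [Qpoly]
  | insert α s ha ih =>
    have e : Qpoly (insert α s) = α * Qpoly s := Finset.prod_insert ha
    rw [e, applyDer_mul]
    exact dvd_add (mul_dvd_mul_right (hθ α (by simp)) _)
      (mul_dvd_mul_left _ (ih fun β hβ => hθ β (by simp [hβ])))

/-- degree zero derivations of an essential arrangement vanish -/
lemma D_zero {n : ℕ} {A : Finset (MvPolynomial (Fin n) K)} (hA : IsArrangement A)
    (hE : IsEssential A) {θ : Fin n → MvPolynomial (Fin n) K}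
    (hh : ∀ j, (θ j).IsHomogeneous 0) (hθ : ∀ α ∈ A, α ∣ applyDer θ α) : θ = 0 := by
  have h0 : ∀ i, ∃ a, θ i = C a := by
    intro i
    have := hh i
    rw [← totalDegree_zero_iff_isHomogeneous, totalDegree_eq_zero_iff_eq_C] at this
    exact ⟨_, this⟩
  choose v hv using h0
  have : v = 0 := by
    apply hE
    intro α h
    obtain ⟨a, ha, -, ha'⟩ := pderiv_lin (hA.1 α h).2
    obtain ⟨g, hg⟩ := hθ α h
    have := congrArg (eval 0) hg
    rw [map_mul, ha' 0] at this
    simp only [applyDer, ha, hv, map_sum, map_mul, eval_C, Pi.zero_apply, mul_zero,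
      Finset.sum_const_zero, zero_mul] at this
    rw [ha', ← this]
    exact Finset.sum_congr rfl fun i _ => mul_comm _ _
  ext1 j
  simp [hv, this]

/-- If `D_0(A)_d = 0` then `D(A)_d ⊆ S θ_E`. -/
lemma D_E {n : ℕ} {A : Finset (MvPolynomial (Fin n) K)} (hA : IsArrangement A)
    (hne : A.Nonempty) {d : ℕ} (hd : d + 1 < mdr A) {θ : Fin n → MvPolynomial (Fin n) K}
    (hh : ∀ j, (θ j).IsHomogeneous (d + 1)) (hθ : ∀ α ∈ A, α ∣ applyDer θ α) :
    ∃ g : MvPolynomial (Fin n) K, g.IsHomogeneous d ∧ ∀ j, θ j = g * X j := by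
  obtain ⟨g, hg⟩ := D_dvd A hθ
  have hc : 0 < A.card := hne.card_pos
  have hgd : g.IsHomogeneous d := by
    refine hom_div (Q_hom hA) (Q_ne hA) ?_
    rw [← hg]
    convert applyDer_hom hh (Q_hom hA) using 1
    omega
  have hnm := Nat.notMem_of_lt_sInf hd
  set c : K := (A.card : K)⁻¹ with hcdef
  have hcc : (A.card : MvPolynomial (Fin n) K) * C c = 1 := by
    rw [← map_natCast (C : K →+* MvPolynomial (Fin n) K), ← C_mul, hcdef,
      mul_inv_cancel₀ (by exact_mod_cast hc.ne'), C_1]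
  refine ⟨C c * g, hgd.C_mul _, ?_⟩
  by_contra hcon
  apply hnm
  refine ⟨fun j => θ j - (C c * g) * X j, ?_, ?_, ?_⟩
  · intro h0
    exact hcon fun j => sub_eq_zero.1 (congrFun h0 j)
  · exact fun j => (hh j).sub ((hgd.C_mul _).mul (isHomogeneous_X _ _))
  · rw [applyDer_sub, applyDer_smul_E _ (Q_hom hA), hg, ← mul_assoc, hcc]
    ring

lemma restr_matrix {n : ℕ} (hn : 1 ≤ n) (a : Fin n → K) (ha : a ≠ 0)
    (e : (Fin (n - 1) → K) →ₗ[K] (Fin n → K)) (he : Function.Injective e)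
    (hz : ∀ w, ∑ i, a i * e w i = 0) :
    ∃ (E : Matrix (Fin n) (Fin (n - 1)) K) (P : Matrix (Fin (n - 1)) (Fin n) K) (u : Fin n → K),
      (∀ w, e w = Matrix.mulVec E w) ∧ P * E = 1 ∧ E * P = 1 - Matrix.vecMulVec u a := by
  obtain ⟨p, hp⟩ := LinearMap.exists_leftInverse_of_injective e (LinearMap.ker_eq_bot.2 he)
  let f : (Fin n → K) →ₗ[K] K := Fintype.linearCombination K a
  have hf : ∀ v, f v = ∑ i, a i * v i := by
    intro v; simp [f, Fintype.linearCombination_apply, mul_comm]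
  have hf0 : f ≠ 0 := by
    intro h0
    apply ha
    ext i
    have := hf (Pi.single i 1)
    rw [h0] at this
    simpa [Pi.single_apply] using this.symm
  have hsurj : Function.Surjective f := LinearMap.surjective hf0
  obtain ⟨b, hb⟩ := hsurj 1
  have hr : LinearMap.range e = LinearMap.ker f := by
    apply Submodule.eq_of_le_of_finrank_eq
    · rintro _ ⟨w, rfl⟩
      rw [LinearMap.mem_ker, hf, hz]
    · have h1 := LinearMap.finrank_range_add_finrank_ker f
      rw [LinearMap.range_eq_top.2 hsurj] at h1
      have h2 := LinearMap.finrank_range_of_inj he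
      simp at h1 h2
      omega
  have key : ∀ v, e (p v) = v - (∑ i, a i * v i) • (b - e (p b)) := by
    intro v
    have hm : v - f v • b ∈ LinearMap.range e := by
      rw [hr, LinearMap.mem_ker, map_sub, map_smul, hb]; simp
    obtain ⟨w, hw⟩ := hm
    have hpw : p (e w) = w := LinearMap.congr_fun hp w
    have h3 : e (p (e w)) = e w := by rw [hpw]
    rw [hw, map_sub, map_sub, map_smul, map_smul] at h3
    rw [← hf, smul_sub, sub_eq_iff_eq_add.1 h3]
    abel
  refine ⟨LinearMap.toMatrix' e, LinearMap.toMatrix' p, b - e (p b), ?_, ?_, ?_⟩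
  · intro w
    rw [LinearMap.toMatrix'_mulVec]
  · rw [← LinearMap.toMatrix'_comp, hp, LinearMap.toMatrix'_id]
  · rw [← LinearMap.toMatrix'_comp]
    ext i k
    rw [LinearMap.toMatrix'_apply, LinearMap.comp_apply, key]
    simp [Pi.single_apply, Matrix.one_apply, Matrix.vecMulVec_apply, mul_comm, eq_comm]

lemma restr_package {n : ℕ} (hn : 1 ≤ n) {H : MvPolynomial (Fin n) K} (hH : H.IsHomogeneous 1)
    (hH0 : H ≠ 0)
    (e : (Fin (n - 1) → K) →ₗ[K] (Fin n → K)) (he : Function.Injective e)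
    (hz : ∀ w, eval (e w) H = 0) :
    ∃ ρ : MvPolynomial (Fin n) K →ₐ[K] MvPolynomial (Fin (n - 1)) K,
      (∀ d f, f.IsHomogeneous d → (ρ f).IsHomogeneous d) ∧
      (∀ w f, eval w (ρ f) = eval (e w) f) ∧
      (∀ d g, g.IsHomogeneous d → ∃ f, f.IsHomogeneous d ∧ ρ f = g) ∧
      (∀ f, ρ f = 0 → H ∣ f) ∧
      ∀ (θ : Fin n → MvPolynomial (Fin n) K) (d : ℕ), (∀ j, (θ j).IsHomogeneous d) →
        H ∣ applyDer θ H → ∃ η : Fin (n - 1) → MvPolynomial (Fin (n - 1)) K,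
          (∀ j, (η j).IsHomogeneous d) ∧
          (∀ L, L.IsHomogeneous 1 → applyDer η (ρ L) = ρ (applyDer θ L)) ∧
          ∀ g, (∀ j, η j = g * X j) → ∀ i, ρ (θ i) = g * ρ (X i) := by
  obtain ⟨a, ha, hHa, hHe⟩ := pderiv_lin hH
  have ha0 : a ≠ 0 := by
    rintro rfl
    apply hH0; rw [hHa]; simp
  obtain ⟨E, P, u, hE, hPE, hEP⟩ := restr_matrix hn a ha0 e he (fun w => by rw [← hHe, hz])
  have linhom : ∀ {p q : ℕ} (M : Matrix (Fin p) (Fin q) K) (i : Fin p),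
      (∑ j, C (M i j) * X j : MvPolynomial (Fin q) K).IsHomogeneous 1 := fun M i =>
    IsHomogeneous.sum _ _ _ fun j _ => isHomogeneous_C_mul_X _ _
  let ρ : MvPolynomial (Fin n) K →ₐ[K] MvPolynomial (Fin (n - 1)) K :=
    aeval fun i => ∑ j, C (E i j) * X j
  let σ : MvPolynomial (Fin (n - 1)) K →ₐ[K] MvPolynomial (Fin n) K :=
    aeval fun i => ∑ j, C (P i j) * X j
  have hρX : ∀ i, ρ (X i) = ∑ j, C (E i j) * X j := fun i => by simp [ρ]
  have hσX : ∀ i, σ (X i) = ∑ j, C (P i j) * X j := fun i => by simp [σ]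
  have hρC : ∀ c, ρ (C c) = C c := fun c => by simp [ρ]
  have hσC : ∀ c, σ (C c) = C c := fun c => by simp [σ]
  have hρH : ρ H = 0 := by
    apply MvPolynomial.funext
    intro w
    rw [map_zero, ← hz w, hHe, hE, hHa, map_sum, map_sum]
    refine Finset.sum_congr rfl fun i _ => ?_
    rw [map_mul, hρC, hρX]
    simp [Matrix.mulVec, dotProduct]
  have hEPc : ∀ i k, ∑ j, E i j * P j k = (1 : Matrix (Fin n) (Fin n) K) i k - u i * a k := by
    intro i k
    rw [← Matrix.mul_apply, hEP]; simp [Matrix.vecMulVec_apply]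
  have hPEc : ∀ i k, ∑ j, P i j * E j k = (1 : Matrix (Fin (n-1)) (Fin (n-1)) K) i k := by
    intro i k
    rw [← Matrix.mul_apply, hPE]
  have hcomp : ∀ {p q s r : ℕ} (M : Matrix (Fin p) (Fin q) K) (N : Matrix (Fin q) (Fin s) K)
      (x : Fin s → MvPolynomial (Fin r) K) (i : Fin p),
      ∑ j, C (M i j) * ∑ k, C (N j k) * x k = ∑ k, C (∑ j, M i j * N j k) * x k := by
    intro p q s r M N x i
    simp only [Finset.mul_sum, map_sum, Finset.sum_mul, map_mul, ← mul_assoc]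
    exact Finset.sum_comm
  have hEPx : ∀ {r : ℕ} (x : Fin n → MvPolynomial (Fin r) K) (i : Fin n),
      ∑ j, C (E i j) * ∑ k, C (P j k) * x k = x i - C (u i) * ∑ k, C (a k) * x k := by
    intro r x i
    rw [hcomp]
    simp only [hEPc, map_sub, sub_mul, Finset.sum_sub_distrib, Finset.mul_sum, map_mul, mul_assoc]
    simp [Matrix.one_apply, ite_mul, apply_ite]
  refine ⟨ρ, ?_, ?_, ?_, ?_, ?_⟩
  · intro d f hf
    have := hf.aeval _ (linhom E)
    rwa [one_mul] at this
  · intro w f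
    rw [hE]
    induction f using MvPolynomial.induction_on with
    | C c => simp [hρC]
    | add p q hp hq => simp [hp, hq]
    | mul_X p i hp => simp [hp, hρX, Matrix.mulVec, dotProduct]
  · intro d g hg
    refine ⟨σ g, by have := hg.aeval _ (linhom P); rwa [one_mul] at this, ?_⟩
    have : ρ.comp σ = AlgHom.id K _ := by
      apply MvPolynomial.algHom_ext
      intro i
      rw [AlgHom.comp_apply, hσX, map_sum]
      simp only [map_mul, hρC, hρX]
      rw [hcomp]
      simp [hPEc, Matrix.one_apply, apply_ite, ite_mul]
    exact DFunLike.congr_fun this g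
  · intro f hf
    have : (Ideal.Quotient.mkₐ K (Ideal.span {H})).comp (σ.comp ρ)
        = Ideal.Quotient.mkₐ K (Ideal.span {H}) := by
      apply MvPolynomial.algHom_ext
      intro i
      simp only [AlgHom.comp_apply]
      rw [hρX, map_sum]
      simp only [map_mul, hσC, hσX]
      rw [hEPx, ← hHa, Ideal.Quotient.mkₐ_eq_mk, Ideal.Quotient.eq, Ideal.mem_span_singleton]
      refine ⟨- C (u i), ?_⟩
      ring
    have h2 := DFunLike.congr_fun this f
    simp only [AlgHom.comp_apply, hf, map_zero] at h2
    rw [Ideal.Quotient.mkₐ_eq_mk, eq_comm, Ideal.Quotient.eq_zero_iff_dvd] at h2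
    exact h2
  · intro θ d hθ hd
    have hρhom : ∀ i, (ρ (θ i)).IsHomogeneous d := fun i => by
      have := (hθ i).aeval _ (linhom E)
      rwa [one_mul] at this
    have h0 : ∑ k, C (a k) * ρ (θ k) = 0 := by
      obtain ⟨g, hg⟩ := hd
      have := congrArg ρ hg
      rw [map_mul, hρH, zero_mul] at this
      rw [← this, applyDer, map_sum]
      refine Finset.sum_congr rfl fun i _ => ?_
      rw [ha, map_mul, hρC, mul_comm]
    have hback : ∀ i, ∑ j, C (E i j) * ∑ k, C (P j k) * ρ (θ k) = ρ (θ i) := by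
      intro i
      rw [hEPx, h0, mul_zero, sub_zero]
    have hηhom : ∀ j, (∑ k, C (P j k) * ρ (θ k)).IsHomogeneous d :=
      fun j => IsHomogeneous.sum _ _ _ fun k _ => (hρhom k).C_mul _
    obtain ⟨η, hη⟩ : ∃ η : Fin (n - 1) → MvPolynomial (Fin (n - 1)) K,
      ∀ j, η j = ∑ k, C (P j k) * ρ (θ k) := ⟨_, fun _ => rfl⟩
    simp only [← hη] at hback hηhom
    refine ⟨η, hηhom, ?_, ?_⟩
    · intro L hL
      obtain ⟨b, hb, hLb, -⟩ := pderiv_lin hL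
      have e1 : ∀ j, pderiv j (ρ L) = ∑ i, C (b i) * C (E i j) := by
        intro j
        rw [hLb, map_sum, map_sum]
        refine Finset.sum_congr rfl fun i _ => ?_
        rw [map_mul, hρC, hρX, pderiv_C_mul, map_sum]
        simp [pderiv_X, Pi.single_apply]
      simp only [applyDer, e1, map_sum, map_mul, hb, hρC, ← hback, Finset.mul_sum, Finset.sum_mul]
      rw [Finset.sum_comm]
      exact Finset.sum_congr rfl fun j _ => Finset.sum_congr rfl fun i _ => by ring
    · intro g hg i
      rw [← hback, hρX, Finset.mul_sum]
      exact Finset.sum_congr rfl fun j _ => by rw [hg]; ring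

lemma mdr_mem {n : ℕ} (hn : 2 ≤ n) {A : Finset (MvPolynomial (Fin n) K)} (hA : IsArrangement A) :
    ∃ θ : Fin n → MvPolynomial (Fin n) K, θ ≠ 0 ∧
      (∀ j, (θ j).IsHomogeneous (mdr A)) ∧ applyDer θ (Qpoly A) = 0 := by
  refine Nat.sInf_mem (s := {r | ∃ θ : Fin n → MvPolynomial (Fin n) K, θ ≠ 0 ∧
    (∀ j, (θ j).IsHomogeneous r) ∧ applyDer θ (Qpoly A) = 0}) ?_
  let i : Fin n := ⟨0, by omega⟩
  let k : Fin n := ⟨1, by omega⟩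
  have hik : i ≠ k := by simp [i, k]
  by_cases h : pderiv i (Qpoly A) = 0
  · refine ⟨0, Pi.single i 1, ?_, ?_, ?_⟩
    · intro h0
      simpa using congrFun h0 i
    · intro j
      by_cases hj : j = i
      · subst hj; simpa using isHomogeneous_one _ _
      · simpa [Pi.single_apply, hj] using isHomogeneous_zero _ _ _
    · simp [applyDer, Pi.single_apply, h]
  · refine ⟨A.card - 1, fun j => if j = i then - pderiv k (Qpoly A) else
      if j = k then pderiv i (Qpoly A) else 0, ?_, ?_, ?_⟩
    · intro h0
      have := congrFun h0 k
      simp [hik.symm] at this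
      exact h this
    · intro j
      dsimp only
      split_ifs
      · exact (Q_hom hA).pderiv.neg
      · exact (Q_hom hA).pderiv
      · exact isHomogeneous_zero _ _ _
    · rw [applyDer, Finset.sum_eq_add i k hik]
      · simp [hik.symm]; ring
      · intro j _ hj
        simp [hj.1, hj.2]
      · simp
      · simp

/-- `D(A)` in low degree for essential `A`. -/
lemma D_E' {n : ℕ} {A : Finset (MvPolynomial (Fin n) K)} (hA : IsArrangement A)
    (hE : IsEssential A) (hne : A.Nonempty) {d : ℕ} (hd : d < mdr A)
    {θ : Fin n → MvPolynomial (Fin n) K}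
    (hh : ∀ j, (θ j).IsHomogeneous d) (hθ : ∀ α ∈ A, α ∣ applyDer θ α) :
    ∃ g : MvPolynomial (Fin n) K, ∀ j, θ j = g * X j := by
  cases d with
  | zero => exact ⟨0, fun j => by rw [D_zero hA hE hh hθ]; simp⟩
  | succ d =>
    obtain ⟨g, -, hg⟩ := D_E hA hne hd hh hθ
    exact ⟨g, hg⟩

/-- No multiple of the Euler derivation lies in `D_0(A)`. -/
lemma E_D0 {n : ℕ} {A : Finset (MvPolynomial (Fin n) K)} (hA : IsArrangement A)
    (hne : A.Nonempty) {θ : Fin n → MvPolynomial (Fin n) K} {g : MvPolynomial (Fin n) K}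
    (hg : ∀ j, θ j = g * X j) (h0 : applyDer θ (Qpoly A) = 0) : θ = 0 := by
  have : θ = fun j => g * X j := funext hg
  rw [this, applyDer_smul_E _ (Q_hom hA)] at h0
  have hc : (A.card : MvPolynomial (Fin n) K) ≠ 0 := by
    exact_mod_cast hne.card_pos.ne'
  have : g = 0 := by simpa [hc, Q_ne hA] using h0
  funext j
  simp [hg, this]

lemma mdr_le {n : ℕ} (hn : 2 ≤ n) {A : Finset (MvPolynomial (Fin n) K)} (hA : IsArrangement A)
    {H : MvPolynomial (Fin n) K} (hH : H ∈ A) (hne : (A.erase H).Nonempty) :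
    mdr A ≤ mdr (A.erase H) + 1 := by
  obtain ⟨θ, hθ0, hθh, hθ⟩ := mdr_mem hn (arr_erase hA H)
  apply Nat.sInf_le
  have hc : (A.card : K) ≠ 0 := by
    exact_mod_cast (Finset.card_pos.2 ⟨H, hH⟩).ne'
  set c : K := (A.card : K)⁻¹ with hcdef
  have hcc : (A.card : MvPolynomial (Fin n) K) * C c = 1 := by
    rw [← map_natCast (C : K →+* MvPolynomial (Fin n) K), ← C_mul, hcdef,
      mul_inv_cancel₀ hc, C_1]
  have hHh := (hA.1 H hH).2
  have hfh : (applyDer θ H).IsHomogeneous (mdr (A.erase H)) := by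
    simpa using applyDer_hom hθh hHh
  refine ⟨fun j => H * θ j - (C c * applyDer θ H) * X j, ?_, ?_, ?_⟩
  · intro h0
    have h1 : ∀ j, H * θ j = (C c * applyDer θ H) * X j := fun j => sub_eq_zero.1 (congrFun h0 j)
    obtain ⟨L, hL⟩ := hne
    have hLA := Finset.mem_of_mem_erase hL
    have hp := lin_prime hHh (hA.1 H hH).1
    have h2 : H * applyDer θ L = (C c * applyDer θ H) * L := by
      rw [← applyDer_smul, funext h1, applyDer_smul_E _ (hA.1 L hLA).2]
      simp
    have h3 : H ∣ C c * applyDer θ H :=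
      (hp.dvd_or_dvd (Dvd.intro _ h2)).resolve_right
        (arr_ndvd hA hH hLA (Finset.ne_of_mem_erase hL).symm)
    obtain ⟨g, hg⟩ := h3
    apply hθ0
    refine E_D0 (g := g) (arr_erase hA H) ⟨L, hL⟩ (fun j => ?_) hθ
    apply mul_left_cancel₀ (hA.1 H hH).1
    rw [h1, hg, mul_assoc]
  · intro j
    refine IsHomogeneous.sub ?_ ((hfh.C_mul _).mul (isHomogeneous_X _ _))
    rw [add_comm]
    exact hHh.mul (hθh j)
  · rw [applyDer_sub, applyDer_smul, applyDer_smul_E _ (Q_hom hA), ← mul_assoc, hcc,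
      Q_erase hH, applyDer_mul, hθ]
    ring

/-- Addition-deletion theorem for `r(A)`: Let `ℓ ≥ 2`, let `A` be an
essential hyperplane arrangement in `K^ℓ`, let `H ∈ A`, and suppose `A' = A \ {H}` is
also essential and nonempty. Let `r = r(A)`, `r' = r(A')` and `r'' = r(A^H)`, where
`A^H` is the restricted arrangement in `H ≅ K^{ℓ-1}`. If `r' < r''`, then `r = r' + 1`. -/
theorem mdr_addition_deletion (hl : 2 ≤ ℓ) (A : Finset (MvPolynomial (Fin ℓ) K))
    (hA : IsArrangement A) (hAess : IsEssential A)
    (H : MvPolynomial (Fin ℓ) K) (hH : H ∈ A)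
    (hA'ess : IsEssential (A.erase H)) (hA'ne : (A.erase H).Nonempty)
    (B : Finset (MvPolynomial (Fin (ℓ - 1)) K)) (hB : IsRestrictionOf A H B)
    (h : mdr (A.erase H) < mdr B) :
    mdr A = mdr (A.erase H) + 1 := by
  refine le_antisymm (mdr_le hl hA hH hA'ne) ?_
  by_contra hlt
  have hle : mdr A ≤ mdr (A.erase H) := by omega
  obtain ⟨hBarr, e, he, hz, himg⟩ := hB
  have hHh := (hA.1 H hH).2
  have hH0 := (hA.1 H hH).1
  obtain ⟨ρ, hρh, hρe, hρs, hρk, hρθ⟩ := restr_package (by omega) hHh hH0 e he hz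
  obtain ⟨θ, hθ0, hθh, hθ⟩ := mdr_mem hl hA
  have hθD : ∀ α ∈ A, α ∣ applyDer θ α := fun α hα => D0_D hA hθ hα
  obtain ⟨d, hd⟩ : ∃ d, mdr A = d + 1 := by
    refine Nat.exists_eq_succ_of_ne_zero fun h0 => hθ0 ?_
    rw [h0] at hθh
    exact D_zero hA hAess hθh hθD
  rw [hd] at hθh
  obtain ⟨η, hηh, hηρ, hηE⟩ := hρθ θ _ hθh (hθD H hH)
  have hBne : B.Nonempty := by
    have h1 := hA'ne.image (fun L => {w : Fin (ℓ - 1) → K | eval (e w) L = 0})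
    rw [← himg] at h1
    exact Finset.image_nonempty.1 h1
  have hηD : ∀ β ∈ B, β ∣ applyDer η β := by
    intro β hβ
    have h1 := Finset.mem_image_of_mem (fun β => {w : Fin (ℓ - 1) → K | eval w β = 0}) hβ
    rw [himg, Finset.mem_image] at h1
    obtain ⟨L, hL, hLβ⟩ := h1
    have hLA := Finset.mem_of_mem_erase hL
    have hLh := (hA.1 L hLA).2
    obtain ⟨c, hc⟩ := lin_prop (hρh 1 L hLh) (hBarr.1 β hβ).2 (fun w hw => by
      rw [hρe] at hw
      have : w ∈ {w : Fin (ℓ - 1) → K | eval w β = 0} := hLβ ▸ hw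
      exact this)
    have hc0 : c ≠ 0 := by
      rintro rfl
      exact (hBarr.1 β hβ).1 (by simpa using hc)
    obtain ⟨g, hg⟩ := hθD L hLA
    refine ⟨ρ g, ?_⟩
    have h2 : applyDer η β = c • applyDer η (ρ L) := by
      rw [hc]
      simp [applyDer, Finset.smul_sum]
    rw [h2, hηρ L hLh, hg, hc, map_mul, smul_mul_assoc]
  obtain ⟨gb, hgbh, hgb⟩ := D_E hBarr hBne (by omega) hηh hηD
  obtain ⟨g, hgh, rfl⟩ := hρs d gb hgbh
  have hdiv : ∀ i, ∃ q, θ i - g * X i = H * q := by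
    intro i
    apply hρk
    rw [map_sub, map_mul, hηE _ hgb, sub_self]
  choose φ hφ using hdiv
  have hφh : ∀ i, (φ i).IsHomogeneous d := by
    intro i
    apply hom_div hHh hH0
    rw [← hφ, add_comm]
    exact (hθh i).sub (hgh.mul (isHomogeneous_X _ _))
  have hφD : ∀ α ∈ A.erase H, α ∣ applyDer φ α := by
    intro α hα
    have hαA := Finset.mem_of_mem_erase hα
    have h1 : H * applyDer φ α = applyDer θ α - g * α := by
      rw [← applyDer_smul, ← funext hφ, applyDer_sub, applyDer_smul_E _ (hA.1 α hαA).2]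
      simp
    have h2 : α ∣ H * applyDer φ α := by
      rw [h1]
      exact dvd_sub (hθD α hαA) (dvd_mul_left _ _)
    exact ((lin_prime (hA.1 α hαA).2 (hA.1 α hαA).1).dvd_or_dvd h2).resolve_left
      (arr_ndvd hA hαA hH (Finset.ne_of_mem_erase hα))
  obtain ⟨q, hq⟩ := D_E' (arr_erase hA H) hA'ess hA'ne (by omega) hφh hφD
  apply hθ0
  refine E_D0 (g := g + H * q) hA ⟨H, hH⟩ (fun j => ?_) hθ
  have := hφ j
  rw [hq] at this
  linear_combination this
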